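/- Let f be a monotone, normalized, submodular function on a finite ground set V with f({j}) > 0 for every j ∈ V, and let X ⊆ V be nonempty. Then f(X) ≤ Σ_{j∈X} f({j}) ≤ (|X| / (1 + (|X| − 1)(1 − κ̂_f(X)))) · f(X), and consequently also Σ_{j∈X} f({j}) ≤ (|X| / (1 + (|X| − 1)(1 − κ_f(X)))) · f(X). -/

import Mathlib

/-!
Write `g j = f X - f (X \ {j})` for the gain of `j` on top of the rest of `X`. Subadditivity gives
`f X ≤ ∑ f {j}`. By submodularity, removing the elements of `A ⊆ X` one at a time loses at least
`g i` at each step (`marginal_sum_le`); with `A = X \ {j}` this is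
`f {j} + ∑ i ∈ X \ {j}, g i ≤ f X`. Summing over `j ∈ X` counts each `g i` exactly `|X| - 1` times:
`∑ f {j} + (|X| - 1) ∑ g j ≤ |X| f X` (`sum_singleton_add_le`).
Any `c ≥ 0` with `c * ∑ f {j} ≤ ∑ g j` then yields `∑ f {j} ≤ |X| / (1 + (|X| - 1) c) * f X`, and
both `1 - κ̂` (the ratio of the sums) and `1 - κ` (the least ratio) are such `c`.
-/

open Finset

theorem le_sum_singleton {V : Type*} [DecidableEq V] (f : Finset V → ℝ)
    (hsub : ∀ S T : Finset V, f S + f T ≥ f (S ∪ T) + f (S ∩ T))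
    (hnorm : f ∅ = 0) (X : Finset V) : f X ≤ ∑ j ∈ X, f {j} := by
  induction X using Finset.induction_on with
  | empty => simp [hnorm]
  | insert a A ha ih =>
    have h := hsub {a} A
    rw [Finset.singleton_inter_of_notMem ha, hnorm, ← Finset.insert_eq] at h
    rw [Finset.sum_insert ha]
    linarith

/-- The loss in removing all of `A` from `X` is at least the sum of the individual losses. -/
theorem marginal_sum_le {V : Type*} [DecidableEq V] (f : Finset V → ℝ)
    (hsub : ∀ S T : Finset V, f S + f T ≥ f (S ∪ T) + f (S ∩ T))
    (X A : Finset V) (hA : A ⊆ X) :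
    f (X \ A) + ∑ j ∈ A, (f X - f (X \ {j})) ≤ f X := by
  induction A using Finset.induction_on with
  | empty => simp
  | insert a A ha ih =>
    have ih' := ih ((Finset.subset_insert a A).trans hA)
    have h := hsub (X \ A) (X \ {a})
    have hu : (X \ A) ∪ (X \ {a}) = X := by
      ext x; simp only [mem_union, mem_sdiff, mem_singleton]; grind
    have hi : (X \ A) ∩ (X \ {a}) = X \ insert a A := by
      ext x; simp only [mem_inter, mem_sdiff, mem_singleton, mem_insert]; grind
    rw [hu, hi] at h
    rw [Finset.sum_insert ha]
    linarith

theorem sum_singleton_add_le {V : Type*} [DecidableEq V] (f : Finset V → ℝ)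
    (hsub : ∀ S T : Finset V, f S + f T ≥ f (S ∪ T) + f (S ∩ T)) (X : Finset V) :
    ∑ j ∈ X, f {j} + ((X.card : ℝ) - 1) * ∑ j ∈ X, (f X - f (X \ {j})) ≤ X.card * f X := by
  set G := ∑ j ∈ X, (f X - f (X \ {j})) with hG
  have key : ∀ j ∈ X, f {j} + (G - (f X - f (X \ {j}))) ≤ f X := by
    intro j hj
    have hj' : {j} ⊆ X := Finset.singleton_subset_iff.2 hj
    have h := marginal_sum_le f hsub X (X \ {j}) Finset.sdiff_subset
    rw [Finset.sdiff_sdiff_eq_self hj'] at h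
    have h2 := Finset.sum_sdiff (f := fun i => f X - f (X \ {i})) hj'
    rw [Finset.sum_singleton] at h2
    linarith
  have h := Finset.sum_le_sum key
  rw [Finset.sum_add_distrib, Finset.sum_sub_distrib, ← hG] at h
  simp only [Finset.sum_const, nsmul_eq_mul] at h
  linarith

/-- Lemma 3: `f(X) ≤ ∑_{j∈X} f {j} ≤ (|X| / (1 + (|X|-1)(1-κ̂_f(X)))) f(X)`,
and consequently the same bound with the weaker curvature `κ_f(X)`. -/
theorem modular_upper_bound_curvature
    {V : Type*} [Fintype V] [DecidableEq V]
    (f : Finset V → ℝ)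
    (hsub : ∀ S T : Finset V, f S + f T ≥ f (S ∪ T) + f (S ∩ T))
    (hmono : ∀ S T : Finset V, S ⊆ T → f S ≤ f T)
    (hnorm : f ∅ = 0)
    (hpos : ∀ j : V, 0 < f {j})
    (X : Finset V) (hX : X.Nonempty)
    (κhat κX : ℝ)
    (hκhat : κhat = 1 - (∑ j ∈ X, (f X - f (X \ {j}))) / (∑ j ∈ X, f {j}))
    (hκX : κX = 1 - X.inf' hX (fun j => (f X - f (X \ {j})) / f {j})) :
    f X ≤ ∑ j ∈ X, f {j} ∧
    (∑ j ∈ X, f {j}) ≤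
      ((X.card : ℝ) / (1 + ((X.card : ℝ) - 1) * (1 - κhat))) * f X ∧
    (∑ j ∈ X, f {j}) ≤
      ((X.card : ℝ) / (1 + ((X.card : ℝ) - 1) * (1 - κX))) * f X := by
  
  have hS : 0 < ∑ j ∈ X, f {j} := Finset.sum_pos (fun j _ => hpos j) hX
  have hn : (1 : ℝ) ≤ X.card := by exact_mod_cast hX.card_pos
  have hg : ∀ j, 0 ≤ f X - f (X \ {j}) := fun j =>
    sub_nonneg.2 (hmono _ _ Finset.sdiff_subset)
  have main := sum_singleton_add_le f hsub X
  have bound : ∀ c : ℝ, 0 ≤ c →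
      c * ∑ j ∈ X, f {j} ≤ ∑ j ∈ X, (f X - f (X \ {j})) →
      ∑ j ∈ X, f {j} ≤ ((X.card : ℝ) / (1 + ((X.card : ℝ) - 1) * c)) * f X := by
    intro c hc hcS
    have hn' : 0 ≤ (X.card : ℝ) - 1 := by linarith
    have hd : 0 < 1 + ((X.card : ℝ) - 1) * c := by positivity
    rw [div_mul_eq_mul_div, le_div_iff₀ hd]
    have := mul_le_mul_of_nonneg_left hcS hn'
    linarith
  refine ⟨le_sum_singleton f hsub hnorm X, ?_, ?_⟩
  · rw [hκhat, sub_sub_cancel]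
    refine bound _ (div_nonneg (Finset.sum_nonneg fun j _ => hg j) hS.le) ?_
    rw [div_mul_cancel₀ _ hS.ne']
  · rw [hκX, sub_sub_cancel]
    refine bound _ (Finset.le_inf' _ _ fun j _ => div_nonneg (hg j) (hpos j).le) ?_
    rw [Finset.mul_sum]
    refine Finset.sum_le_sum fun j hj => ?_
    rw [← le_div_iff₀ (hpos j)]
    exact Finset.inf'_le (fun j => (f X - f (X \ {j})) / f {j}) hj
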